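/- For positive integers β and distinct positive integers x_1,...,x_n, the determinant of the n×n matrix with (i,j) entry (β−1)!/(x_i+j+1)_β equals [(β−1)!·β!···(β+n−2)!] / [(x_1+2)_{β+n−1}···(x_n+2)_{β+n−1}] · ∏_{1≤i<j≤n}(x_j−x_i). -/

import Mathlib

theorem gde_step (β t : ℕ) (hβ : 0 < β) (ht : 0 < t) :
    ((β - 1).factorial : ℚ) / (Nat.ascFactorial t β : ℚ)
      - ((β - 1).factorial : ℚ) / (Nat.ascFactorial (t + 1) β : ℚ)
      = ((β + 1 - 1).factorial : ℚ) / (Nat.ascFactorial t (β + 1) : ℚ) := by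
  obtain ⟨b, rfl⟩ : ∃ b, β = b + 1 := ⟨β - 1, by omega⟩
  obtain ⟨s, rfl⟩ : ∃ s, t = s + 1 := ⟨t - 1, by omega⟩
  have h1 : ((s + 1).ascFactorial (b + 1) : ℚ) ≠ 0 := by
    exact_mod_cast (Nat.ascFactorial_pos s (b + 1)).ne'
  have h2 : ((s + 1 + 1).ascFactorial (b + 1) : ℚ) ≠ 0 := by
    exact_mod_cast (Nat.ascFactorial_pos (s + 1) (b + 1)).ne'
  have e1 : ((s + 1).ascFactorial (b + 1 + 1) : ℚ)
      = (s + 1 + (b + 1)) * (s + 1).ascFactorial (b + 1) := by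
    rw [Nat.ascFactorial_succ]; push_cast; ring
  have e2 : ((s + 1 : ℕ) : ℚ) * (s + 1 + 1).ascFactorial (b + 1)
      = (s + 1 + (b + 1)) * (s + 1).ascFactorial (b + 1) := by
    have := Nat.succ_ascFactorial (s + 1) (b + 1)
    exact_mod_cast this
  have h3 : (s + 1 + (b + 1) : ℚ) ≠ 0 := by positivity
  have h4 : ((s + 1 : ℕ) : ℚ) ≠ 0 := by positivity
  have e3 : ((s + 1 + 1).ascFactorial (b + 1) : ℚ)
      = (s + 1 + (b + 1)) * (s + 1).ascFactorial (b + 1) / ((s + 1 : ℕ) : ℚ) := by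
    rw [eq_div_iff h4, ← e2]; ring
  rw [e1, e3]
  simp only [Nat.add_sub_cancel, Nat.factorial_succ]
  push_cast at *
  field_simp
  ring

theorem gde_expand (m : ℕ) : ∃ c : ℕ → ℚ, c 0 = 1 ∧ ∀ β t : ℕ, 0 < β → 0 < t →
    ((β + m - 1).factorial : ℚ) / (Nat.ascFactorial t (β + m) : ℚ)
      = ∑ k ∈ Finset.range (m + 1),
        c k * (((β - 1).factorial : ℚ) / (Nat.ascFactorial (t + k) β : ℚ)) := by
  induction m with
  | zero => exact ⟨fun _ => 1, rfl, fun β t _ _ => by simp⟩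
  | succ m ih =>
    obtain ⟨c, hc, h⟩ := ih
    refine ⟨fun k => (if k < m + 1 then c k else 0) - (if k = 0 then 0 else c (k - 1)),
      by simp [hc], fun β t hβ ht => ?_⟩
    have := gde_step (β + m) t (by omega) ht
    rw [← add_assoc, ← this, h β t hβ ht, h β (t + 1) hβ (by omega)]
    simp only [sub_mul]
    rw [Finset.sum_sub_distrib]
    congr 1
    · rw [Finset.sum_range_succ _ (m + 1)]
      simp only [lt_irrefl, if_false, zero_mul, add_zero]
      refine Finset.sum_congr rfl fun k hk => ?_
      rw [if_pos (Finset.mem_range.1 hk)]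
    · rw [Finset.sum_range_succ' _ (m + 1)]
      simp only [if_true, zero_mul, add_zero]
      refine Finset.sum_congr rfl fun k hk => ?_
      rw [if_neg (by omega), Nat.add_sub_cancel, show t + 1 + k = t + (k + 1) by omega]

/-- For a positive integer β and distinct positive integers `x_1,…,x_n`,
`det((β−1)!/(x_i+j+1)_β) = [(β−1)!β!⋯(β+n−2)!]/[(x_1+2)_{β+n−1}⋯(x_n+2)_{β+n−1}]
  · ∏_{i<j}(x_j−x_i)` (1-based column index j). -/
theorem general_det_eval (n β : ℕ) (hβ : 0 < β) (x : Fin n → ℕ)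
    (hx : ∀ i, 0 < x i) (hinj : Function.Injective x) :
    Matrix.det (Matrix.of fun i j : Fin n =>
      ((β - 1).factorial : ℚ) / (Nat.ascFactorial (x i + j.val + 2) β : ℚ)) =
    (∏ j ∈ Finset.range n, ((β + j - 1).factorial : ℚ)) /
      (∏ i : Fin n, (Nat.ascFactorial (x i + 2) (β + n - 1) : ℚ)) *
      ∏ i : Fin n, ∏ j ∈ Finset.Ioi i, ((x j : ℚ) - (x i : ℚ)) := by
  choose c hc0 hc using gde_expand
  let U : Matrix (Fin n) (Fin n) ℚ := Matrix.of fun k j =>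
    if j ≤ k then c (n - 1 - j.val) (k.val - j.val) else 0
  have hU : U.det = 1 := by
    rw [Matrix.det_of_lowerTriangular]
    · refine Finset.prod_eq_one fun i _ => ?_
      simp [U, hc0]
    · intro i j hij
      have : i < j := hij
      simp [U, not_le.2 this]
  have hV := Matrix.det_eval_matrixOfPolynomials_eq_det_vandermonde
    (fun i : Fin n => ((x i : ℚ) + 2)) (fun j : Fin n => ascPochhammer ℚ j.val)
    (fun j => ascPochhammer_natDegree _ _) (fun j => monic_ascPochhammer _ _)
  rw [Matrix.det_vandermonde] at hV
  have hfac : (∏ j ∈ Finset.range n, ((β + j - 1).factorial : ℚ))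
      = ∏ j : Fin n, ((β + (n - 1 - j.val) - 1).factorial : ℚ) := by
    rw [← Finset.prod_range_reflect, Finset.prod_range]
  rw [← mul_one (Matrix.det _), ← hU, ← Matrix.det_mul]
  have hM : (Matrix.of fun i j : Fin n =>
      ((β - 1).factorial : ℚ) / (Nat.ascFactorial (x i + j.val + 2) β : ℚ)) * U
      = Matrix.of fun i j : Fin n => ((Nat.ascFactorial (x i + 2) (β + n - 1) : ℚ))⁻¹ *
        (Matrix.of fun i j : Fin n => ((β + (n - 1 - j.val) - 1).factorial : ℚ) *
          (Matrix.of fun i j : Fin n =>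
            (ascPochhammer ℚ j.val).eval ((x i : ℚ) + 2)) i j) i j := by
    ext i j
    simp only [Matrix.mul_apply, Matrix.of_apply, U]
    have hj := j.isLt
    have key := hc (n - 1 - j.val) β (x i + 2 + j.val) hβ (by omega)
    have hasc : (ascPochhammer ℚ j.val).eval ((x i : ℚ) + 2)
        = ((x i + 2).ascFactorial j.val : ℚ) := by
      rw [Nat.cast_ascFactorial]; push_cast; rfl
    have hsplit : (x i + 2).ascFactorial (β + n - 1) = (x i + 2).ascFactorial j.val *
        (x i + 2 + j.val).ascFactorial (β + (n - 1 - j.val)) := by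
      rw [Nat.ascFactorial_mul_ascFactorial]
      congr 1; omega
    have p1 : ((x i + 2).ascFactorial j.val : ℚ) ≠ 0 := by
      exact_mod_cast (Nat.ascFactorial_pos (x i + 1) j.val).ne'
    have lhs : ∑ k : Fin n, ((β - 1).factorial : ℚ) / (Nat.ascFactorial (x i + k.val + 2) β : ℚ)
          * (if j ≤ k then c (n - 1 - j.val) (k.val - j.val) else 0)
        = ∑ k ∈ Finset.range (n - 1 - j.val + 1), c (n - 1 - j.val) k *
          (((β - 1).factorial : ℚ) / (Nat.ascFactorial (x i + 2 + j.val + k) β : ℚ)) := by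
      simp only [Fin.le_def]
      rw [← Finset.sum_range (fun k => ((β - 1).factorial : ℚ) /
        (Nat.ascFactorial (x i + k + 2) β : ℚ)
          * (if j.val ≤ k then c (n - 1 - j.val) (k - j.val) else 0))]
      have hn : n = j.val + (n - 1 - j.val + 1) := by omega
      generalize n - 1 - j.val = m at *
      rw [congrArg Finset.range hn, Finset.sum_range_add, Finset.sum_eq_zero, zero_add]
      · refine Finset.sum_congr rfl fun k _ => ?_
        rw [if_pos (by omega), Nat.add_sub_cancel_left, mul_comm,
          show x i + (j.val + k) + 2 = x i + 2 + j.val + k by omega]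
      · intro k hk
        rw [if_neg (by have := Finset.mem_range.1 hk; omega), mul_zero]
    rw [lhs, ← key, hasc, hsplit]
    push_cast
    field_simp
  rw [hM, Matrix.det_mul_column, Matrix.det_mul_row, ← hV, hfac, Finset.prod_inv_distrib]
  simp only [add_sub_add_right_eq_sub]
  ring
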